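/- Usefulness (correctness) of exponential steps: let p = P⟨x⟩ →ue q = P⟨v^α⟩ with P ∈ E@_{U,A} and P(x) = v. Then there exists a program r and a reduction sequence d : q →ue^k →um r (k useful exponential steps followed by one useful multiplicative step) such that: (1) the evaluation context of each →ue step in d is in E@_{U,A} and the evaluation context of the final →um step is in Em_{U,A}; and (2) k ≥ 0 equals the number of applications of rule (e_NA) in the derivation of P ∈ E@_{U,A}. -/

import Mathlib

/-! ## Terms of the pure λ-calculus (named syntax) -/

inductive Term : Type
  | var : ℕ → Term
  | lam : ℕ → Term → Term
  | app : Term → Term → Term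
  deriving DecidableEq

namespace Term

/-- Size of a term: |x| = 1, |λx.t| = |t|+1, |t u| = |t|+|u|+1. -/
def size : Term → ℕ
  | var _ => 1
  | lam _ t => size t + 1
  | app t u => size t + size u + 1

/-- Free variables of a term. -/
def fv : Term → Finset ℕ
  | var x => {x}
  | lam x t => (fv t).erase x
  | app t u => fv t ∪ fv u

/-- Meta-level substitution t{x←u}. -/
def subst (x : ℕ) (u : Term) : Term → Term
  | var y => if y = x then u else var y
  | lam y t => if y = x then lam y t else lam y (subst x u t)
  | app t s => app (subst x u t) (subst x u s)

def isVarB : Term → Bool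
  | var _ => true
  | _ => false

/-- Values are abstractions (variables are not values). -/
def IsValue (t : Term) : Prop := ∃ x u, t = lam x u

/-- Needed variables of a term. -/
def nv : Term → Finset ℕ
  | var x => {x}
  | lam _ _ => ∅
  | app t u => nv t ∪ nv u

/-- Applied variables of a term. -/
def anv : Term → Finset ℕ
  | var _ => ∅
  | lam _ _ => ∅
  | app (var x) u => insert x (anv u)
  | app (lam y t) u => anv (lam y t) ∪ anv u
  | app (app t s) u => anv (app t s) ∪ anv u

/-- Unapplied variables of a term. -/
def unv : Term → Finset ℕ
  | var x => {x}
  | lam _ _ => ∅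
  | app (var _) u => unv u
  | app (lam y t) u => unv (lam y t) ∪ unv u
  | app (app t s) u => unv (app t s) ∪ unv u

end Term

/-! ## Inert terms and fireballs: i ::= x | i f,  f ::= v | i -/

mutual
  inductive Term.Inert : Term → Prop
    | var (x : ℕ) : Term.Inert (Term.var x)
    | app {i f : Term} : Term.Inert i → Term.Fireball f → Term.Inert (Term.app i f)
  inductive Term.Fireball : Term → Prop
    | val {x : ℕ} {t : Term} : Term.Fireball (Term.lam x t)
    | inert {i : Term} : Term.Inert i → Term.Fireball i
end

/-- Non-variable inert terms i⁺. -/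
def Term.InertPlus (t : Term) : Prop := t.Inert ∧ ∀ x, t ≠ Term.var x

/-! ## β-reduction (closure of the root rule under arbitrary term contexts) -/

inductive Beta : Term → Term → Prop
  | beta (x : ℕ) (t u : Term) : Beta (Term.app (Term.lam x t) u) (Term.subst x u t)
  | lam {t t' : Term} (x : ℕ) : Beta t t' → Beta (Term.lam x t) (Term.lam x t')
  | appL {t t' : Term} (u : Term) : Beta t t' → Beta (Term.app t u) (Term.app t' u)
  | appR {u u' : Term} (t : Term) : Beta u u' → Beta (Term.app t u) (Term.app t u')

/-- `iterRel R n a b`: an n-step R-reduction sequence from a to b. -/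
def iterRel {α : Type} (R : α → α → Prop) : ℕ → α → α → Prop
  | 0 => Eq
  | n + 1 => fun a c => ∃ b, R a b ∧ iterRel R n b c

/-! ## Environments and programs -/

/-- Environments are finite lists of explicit substitutions, written
left-to-right, i.e. E[x←t] is `E ++ [(x, t)]`. -/
abbrev Env := List (ℕ × Term)

def Env.dom (E : Env) : Finset ℕ := (E.map Prod.fst).toFinset

/-- Content of the leftmost explicit substitution on x. -/
def Env.lookupES : Env → ℕ → Option Term
  | [], _ => none
  | (y, t) :: E, x => if y = x then some t else Env.lookupES E x

structure Program where
  tm : Term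
  env : Env

/-- p@[x←u] : appending an explicit substitution at the end of the environment. -/
def Program.appES (p : Program) (x : ℕ) (u : Term) : Program := ⟨p.tm, p.env ++ [(x, u)]⟩

/-- One step of the needed-variables computation along an explicit substitution. -/
def nvStep (V : Finset ℕ) (e : ℕ × Term) : Finset ℕ :=
  if e.1 ∈ V then (V.erase e.1) ∪ Term.nv e.2 else V

/-- Needed variables of a program. -/
def Program.nv (p : Program) : Finset ℕ := p.env.foldl nvStep p.tm.nv

/-- One step of the applied-variables computation (carrying needed variables). -/
def anvStep : Finset ℕ × Finset ℕ → ℕ × Term → Finset ℕ × Finset ℕ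
  | (N, A), (x, u) =>
    (nvStep N (x, u),
      if x ∈ N then
        match u with
        | Term.var y => if x ∈ A then (A.erase x) ∪ {y} else A.erase x
        | _ => (A.erase x) ∪ Term.anv u
      else A)

/-- Applied variables of a program. -/
def Program.anv (p : Program) : Finset ℕ :=
  (p.env.foldl anvStep (p.tm.nv, p.tm.anv)).2

/-- One step of the unapplied-variables computation (carrying needed variables). -/
def unvStep : Finset ℕ × Finset ℕ → ℕ × Term → Finset ℕ × Finset ℕ
  | (N, U), (x, u) =>
    (nvStep N (x, u),
      if x ∈ U ∨ (x ∈ N ∧ u.isVarB = false) then (U.erase x) ∪ Term.unv u else U)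

/-- Unapplied variables of a program. -/
def Program.unv (p : Program) : Finset ℕ :=
  (p.env.foldl unvStep (p.tm.nv, p.tm.unv)).2

/-- Unfolding of a program into a term: unf(t, ε) = t, unf(t, E[x←u]) = unf(t, E){x←u}. -/
def Program.unf (p : Program) : Term :=
  p.env.foldl (fun s e => Term.subst e.1 e.2 s) p.tm

/-! ## Term contexts H ::= ⟨·⟩ | H t | i H (i inert, enforced by WF) -/

inductive HCtx : Type
  | hole : HCtx
  | appL : HCtx → Term → HCtx
  | appR : Term → HCtx → HCtx

namespace HCtx

/-- Well-formedness: in i H, the left part i must be an inert term. -/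
def WF : HCtx → Prop
  | hole => True
  | appL H _ => WF H
  | appR i H => Term.Inert i ∧ WF H

def plug : HCtx → Term → Term
  | hole, t => t
  | appL H u, t => Term.app (plug H t) u
  | appR i H, t => Term.app i (plug H t)

def nv : HCtx → Finset ℕ
  | hole => ∅
  | appL H _ => nv H
  | appR i H => Term.nv i ∪ nv H

def anv : HCtx → Finset ℕ
  | hole => ∅
  | appL H _ => anv H
  | appR i H => Term.anv i ∪ anv H

def unv : HCtx → Finset ℕ
  | hole => ∅
  | appL H _ => unv H
  | appR i H => Term.unv i ∪ unv H

end HCtx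

/-- Applicative term contexts H@ ::= ⟨·⟩ t | H@ t | i H@. -/
inductive HCtx.IsApp : HCtx → Prop
  | base (t : Term) : HCtx.IsApp (HCtx.appL HCtx.hole t)
  | appL {H : HCtx} (t : Term) : HCtx.IsApp H → HCtx.IsApp (HCtx.appL H t)
  | appR {H : HCtx} {i : Term} : Term.Inert i → HCtx.IsApp H → HCtx.IsApp (HCtx.appR i H)

/-! ## Program contexts: hole in the term part (tc) or inside an ES (ec) -/

inductive PCtx : Type
  | tc : HCtx → Env → PCtx
  | ec : Term → Env → ℕ → HCtx → Env → PCtx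

namespace PCtx

/-- P@[x←u] : appending an explicit substitution at the end of the environment of P. -/
def appES : PCtx → ℕ → Term → PCtx
  | tc H E, x, u => tc H (E ++ [(x, u)])
  | ec t E1 y H E2, x, u => ec t E1 y H (E2 ++ [(x, u)])

/-- Plugging a term into a program context. -/
def plugT : PCtx → Term → Program
  | tc H E, t => ⟨H.plug t, E⟩
  | ec u E1 x H E2, t => ⟨u, E1 ++ (x, H.plug t) :: E2⟩

/-- Plugging a program into a program context: the plugged environment is appended
right after the position of the hole. -/
def plugP : PCtx → Program → Program
  | tc H E, q => ⟨H.plug q.tm, q.env ++ E⟩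
  | ec u E1 x H E2, q => ⟨u, E1 ++ (x, H.plug q.tm) :: (q.env ++ E2)⟩

/-- Variables bound by the environment of P. -/
def dom : PCtx → Finset ℕ
  | tc _ E => Env.dom E
  | ec _ E1 y _ E2 => insert y (Env.dom E1 ∪ Env.dom E2)

/-- P(x): content of the leftmost explicit substitution on x occurring after the hole. -/
def lookup : PCtx → ℕ → Option Term
  | tc _ E, x => Env.lookupES E x
  | ec _ _ _ _ E2, x => Env.lookupES E2 x

/-- (P⟨x⟩)@[x←H] : plug the variable x in the hole of P and append the ES [x←H],
whose content H now contains the hole. -/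
def hered (P : PCtx) (x : ℕ) (H : HCtx) : PCtx :=
  ec (P.plugT (Term.var x)).tm (P.plugT (Term.var x)).env x H []

end PCtx

/-! ## Open CbNeed evaluation contexts P ∈ E_V -/

inductive OEC : PCtx → Finset ℕ → Prop
  | ax {H : HCtx} : H.WF → OEC (PCtx.tc H []) H.nv
  | gc {P : PCtx} {V : Finset ℕ} {x : ℕ} (t : Term) :
      OEC P V → x ∉ V → x ∉ P.dom → OEC (P.appES x t) V
  | inert {P : PCtx} {V : Finset ℕ} {x : ℕ} {i : Term} :
      OEC P V → x ∈ V → Term.Inert i → x ∉ P.dom →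
      OEC (P.appES x i) ((V.erase x) ∪ i.nv)
  | her {P : PCtx} {V : Finset ℕ} {x : ℕ} {H : HCtx} :
      OEC P V → x ∉ V → x ∉ P.dom → H.WF →
      OEC (P.hered x H) (V ∪ H.nv)

/-! ## Open CbNeed reduction -/

inductive StepOM : Program → Program → Prop
  | mk {P : PCtx} {V : Finset ℕ} {x : ℕ} {t u : Term} :
      OEC P V →
      StepOM (P.plugT (Term.app (Term.lam x t) u)) (P.plugP ⟨t, [(x, u)]⟩)

inductive StepOE : Program → Program → Prop
  | mk {P : PCtx} {V : Finset ℕ} {x : ℕ} {v : Term} :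
      OEC P V → P.lookup x = some v → v.IsValue →
      StepOE (P.plugT (Term.var x)) (P.plugT v)

def StepOnd (p q : Program) : Prop := StepOM p q ∨ StepOE p q

/-! ## Open CbNeed normal programs -/

inductive PInert : Program → Prop
  | ax {i : Term} : i.Inert → PInert ⟨i, []⟩
  | inert {p : Program} {x : ℕ} {i : Term} :
      PInert p → x ∈ p.nv → i.Inert → PInert (p.appES x i)
  | gc {p : Program} {x : ℕ} (t : Term) :
      PInert p → x ∉ p.nv → PInert (p.appES x t)

inductive PAbs : Program → Prop
  | ax {v : Term} : v.IsValue → PAbs ⟨v, []⟩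
  | gc {p : Program} {x : ℕ} (t : Term) : PAbs p → PAbs (p.appES x t)

def ONorm (p : Program) : Prop := PInert p ∨ PAbs p

/-! ## Useful Open CbNeed: multiplicative and exponential evaluation contexts -/

def upd (S : Finset ℕ) (x y : ℕ) : Finset ℕ := if x ∈ S then (S.erase x) ∪ {y} else S

inductive MEC : PCtx → Finset ℕ → Finset ℕ → Prop
  | ax {H : HCtx} : H.WF → MEC (PCtx.tc H []) H.unv H.anv
  | var {P : PCtx} {U A : Finset ℕ} {x y : ℕ} :
      MEC P U A → x ∈ U ∪ A → x ∉ P.dom →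
      MEC (P.appES x (Term.var y)) (upd U x y) (upd A x y)
  | gc {P : PCtx} {U A : Finset ℕ} {x : ℕ} (t : Term) :
      MEC P U A → x ∉ U ∪ A → x ∉ P.dom → MEC (P.appES x t) U A
  | inert {P : PCtx} {U A : Finset ℕ} {x : ℕ} {i : Term} :
      MEC P U A → x ∈ U ∪ A → i.InertPlus → x ∉ P.dom →
      MEC (P.appES x i) ((U.erase x) ∪ i.unv) ((A.erase x) ∪ i.anv)
  | val {P : PCtx} {U A : Finset ℕ} {x : ℕ} {v : Term} :
      MEC P U A → x ∈ U → x ∉ A → v.IsValue → x ∉ P.dom →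
      MEC (P.appES x v) (U.erase x) A
  | her {P : PCtx} {U A : Finset ℕ} {x : ℕ} {H : HCtx} :
      MEC P U A → x ∉ U ∪ A → x ∉ P.dom → H.WF →
      MEC (P.hered x H) (U ∪ H.unv) (A ∪ H.anv)

/-- Exponential evaluation contexts P ∈ E@_{U,A}; the last (natural number) index
counts the number of applications of rule (e_NA) in the derivation. -/
inductive EEC : PCtx → Finset ℕ → Finset ℕ → ℕ → Prop
  | ax1 {H : HCtx} : H.IsApp → EEC (PCtx.tc H []) H.unv H.anv 0
  | ax2 {P : PCtx} {U A : Finset ℕ} {x : ℕ} {H : HCtx} :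
      MEC P U A → x ∉ U ∪ A → x ∉ P.dom → H.IsApp →
      EEC (P.hered x H) ((U.erase x) ∪ H.unv) (A ∪ H.anv) 0
  | var {P : PCtx} {U A : Finset ℕ} {k : ℕ} {x y : ℕ} :
      EEC P U A k → x ∈ U ∪ A → x ∉ P.dom →
      EEC (P.appES x (Term.var y)) (upd U x y) (upd A x y) k
  | inert {P : PCtx} {U A : Finset ℕ} {k : ℕ} {x : ℕ} {i : Term} :
      EEC P U A k → x ∈ U ∪ A → i.InertPlus → x ∉ P.dom →
      EEC (P.appES x i) ((U.erase x) ∪ i.unv) ((A.erase x) ∪ i.anv) k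
  | gc {P : PCtx} {U A : Finset ℕ} {k : ℕ} {x : ℕ} (t : Term) :
      EEC P U A k → x ∉ U ∪ A → x ∉ P.dom → EEC (P.appES x t) U A k
  | val {P : PCtx} {U A : Finset ℕ} {k : ℕ} {x : ℕ} {v : Term} :
      EEC P U A k → x ∈ U → x ∉ A → v.IsValue → x ∉ P.dom →
      EEC (P.appES x v) (U.erase x) A k
  | na {P : PCtx} {U A : Finset ℕ} {k : ℕ} {x : ℕ} :
      EEC P U A k → x ∉ A → x ∉ P.dom →
      EEC (P.hered x HCtx.hole) (U.erase x) A (k + 1)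

/-! ## Useful Open CbNeed reduction -/

inductive StepUM : Program → Program → Prop
  | mk {P : PCtx} {U A : Finset ℕ} {x : ℕ} {t u : Term} :
      MEC P U A →
      StepUM (P.plugT (Term.app (Term.lam x t) u)) (P.plugP ⟨t, [(x, u)]⟩)

inductive StepUE : Program → Program → Prop
  | mk {P : PCtx} {U A : Finset ℕ} {k : ℕ} {x : ℕ} {v : Term} :
      EEC P U A k → P.lookup x = some v → v.IsValue →
      StepUE (P.plugT (Term.var x)) (P.plugT v)

def StepUnd (p q : Program) : Prop := StepUM p q ∨ StepUE p q

/-- Useful multiplicative steps whose evaluation context lies in Em_{U,A}. -/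
def StepUMat (U A : Finset ℕ) (p q : Program) : Prop :=
  ∃ (P : PCtx) (x : ℕ) (t u : Term), MEC P U A ∧
    p = P.plugT (Term.app (Term.lam x t) u) ∧ q = P.plugP ⟨t, [(x, u)]⟩

/-- Useful exponential steps whose evaluation context lies in E@_{U,A}. -/
def StepUEat (U A : Finset ℕ) (p q : Program) : Prop :=
  ∃ (P : PCtx) (k : ℕ) (x : ℕ) (v : Term), EEC P U A k ∧
    P.lookup x = some v ∧ v.IsValue ∧
    p = P.plugT (Term.var x) ∧ q = P.plugT v

/-! ## Useful normal-form predicates -/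

inductive GenVar : ℕ → Program → Prop
  | ax (x : ℕ) : GenVar x ⟨Term.var x, []⟩
  | her {x : ℕ} {p : Program} (y : ℕ) : GenVar x p → GenVar y (p.appES x (Term.var y))
  | gc {x z : ℕ} {p : Program} (t : Term) : GenVar x p → z ≠ x → GenVar x (p.appES z t)

inductive UfAbs : Program → Prop
  | ax {v : Term} : v.IsValue → UfAbs ⟨v, []⟩
  | gv {p : Program} {x : ℕ} {v : Term} : GenVar x p → v.IsValue → UfAbs (p.appES x v)
  | gc {p : Program} {x : ℕ} (t : Term) : UfAbs p → UfAbs (p.appES x t)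

inductive UfInert : Program → Prop
  | ax {i : Term} : i.InertPlus → UfInert ⟨i, []⟩
  | gv {p : Program} {x : ℕ} {i : Term} : GenVar x p → i.InertPlus → UfInert (p.appES x i)
  | inert {p : Program} {x : ℕ} {i : Term} :
      UfInert p → x ∈ p.nv → i.Inert → UfInert (p.appES x i)
  | useless {p : Program} {x : ℕ} {v : Term} :
      UfInert p → x ∈ p.unv → x ∉ p.anv → v.IsValue → UfInert (p.appES x v)
  | gc {p : Program} {x : ℕ} (t : Term) : UfInert p → x ∉ p.nv → UfInert (p.appES x t)

def UfNorm (p : Program) : Prop := UfInert p ∨ UfAbs p ∨ ∃ x, GenVar x p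

/-! ## The size-exploding family -/

/-- t₁ := λx.λy. y x x  (x := 0, y := 1). -/
def t1 : Term := Term.lam 0 (Term.lam 1 (Term.app (Term.app (Term.var 1) (Term.var 0)) (Term.var 0)))

/-- λy. y x x. -/
def tbody : Term := Term.lam 1 (Term.app (Term.app (Term.var 1) (Term.var 0)) (Term.var 0))

/-- The family t_n (values for n ≥ 1; tfam 0 is a dummy). -/
def tfam : ℕ → Term
  | 0 => t1
  | 1 => t1
  | n + 2 => Term.lam 0 (Term.app (tfam (n + 1)) tbody)

/-- I := λz.z. -/
def Idt : Term := Term.lam 2 (Term.var 2)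

/-- The family u_n : u₀ = I, u_{n+1} = λy. y u_n u_n. -/
def ufam : ℕ → Term
  | 0 => Idt
  | n + 1 => Term.lam 1 (Term.app (Term.app (Term.var 1) (ufam n)) (ufam n))

/-!
Plugging a value `v` into an applicative term context `H@ = H⟨⟨·⟩ u⟩` creates the β-redex `v u` in
`H`. This lifts to program contexts whose derivation does not use (e_NA), and settles the case
`k = 0`. Each use of (e_NA) puts the hole at `(P⟨y⟩)@[y←⟨·⟩]` for an exponential context `P`;
filling it with `v` gives `(P@[y←v])⟨y⟩`, where `P@[y←v]` is again exponential, has the same indices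
and one use of (e_NA) fewer, and looks `y` up to `v`. So the next step replaces `y` by `v`, and one
recurses.
-/

theorem HCtx.IsApp.exists_wf_plug_app {H : HCtx} (h : H.IsApp) :
    ∃ (H' : HCtx) (u : Term), H'.WF ∧ H'.unv = H.unv ∧ H'.anv = H.anv ∧
      ∀ s, H'.plug (.app s u) = H.plug s := by
  induction h with
  | base u => exact ⟨.hole, u, trivial, rfl, rfl, fun _ => rfl⟩
  | appL t _ ih =>
    obtain ⟨H', u, hwf, hunv, hanv, hplug⟩ := ih
    exact ⟨.appL H' t, u, hwf, hunv, hanv, fun s => congrArg (Term.app · t) (hplug s)⟩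
  | @appR _ i hi _ ih =>
    obtain ⟨H', u, hwf, hunv, hanv, hplug⟩ := ih
    exact ⟨.appR i H', u, ⟨hi, hwf⟩, congrArg (i.unv ∪ ·) hunv, congrArg (i.anv ∪ ·) hanv,
      fun s => congrArg (Term.app i) (hplug s)⟩

namespace Env

theorem lookupES_eq_lookup (E : Env) (x : ℕ) : E.lookupES x = List.lookup x E := by
  induction E with
  | nil => rfl
  | cons e E ih =>
    obtain ⟨y, t⟩ := e
    rcases eq_or_ne x y with rfl | hxy
    · simp [lookupES]
    · simp [lookupES, List.lookup_cons, ih, beq_false_of_ne hxy, hxy.symm]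

theorem lookupES_append (E F : Env) (x : ℕ) :
    lookupES (E ++ F) x = (E.lookupES x).or (F.lookupES x) := by
  simp only [lookupES_eq_lookup, List.lookup_append]

theorem lookupES_eq_none_of_notMem_dom {E : Env} {x : ℕ} (h : x ∉ E.dom) : E.lookupES x = none := by
  rw [lookupES_eq_lookup, List.lookup_eq_none_iff]
  rintro ⟨y, t⟩ hy
  have hyE : y ∈ E.dom := by simpa [dom] using ⟨t, hy⟩
  simpa using fun hxy : x = y => h (hxy ▸ hyE)

end Env

namespace PCtx

theorem plugT_appES (P : PCtx) (x : ℕ) (u t : Term) :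
    (P.appES x u).plugT t = (P.plugT t).appES x u := by
  cases P <;> simp [appES, plugT, Program.appES]

theorem plugT_hered (P : PCtx) (x : ℕ) (H : HCtx) (t : Term) :
    (P.hered x H).plugT t = (P.plugT (.var x)).appES x (H.plug t) := rfl

theorem dom_plugT_env (P : PCtx) (t : Term) : (P.plugT t).env.dom = P.dom := by
  cases P <;> ext <;> simp [plugT, dom, Env.dom]

theorem dom_eq_of_plugT_eq {P Q : PCtx} {s t : Term} (h : P.plugT s = Q.plugT t) :
    P.dom = Q.dom := by
  rw [← dom_plugT_env P s, h, dom_plugT_env]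

theorem lookup_appES (P : PCtx) (x y : ℕ) (u : Term) :
    (P.appES y u).lookup x = (P.lookup x).or (if y = x then some u else none) := by
  cases P <;> exact Env.lookupES_append _ _ _

theorem lookup_eq_none_of_notMem_dom {P : PCtx} {x : ℕ} (h : x ∉ P.dom) : P.lookup x = none := by
  cases P with
  | tc => exact Env.lookupES_eq_none_of_notMem_dom h
  | ec =>
    simp only [dom, Finset.mem_insert, Finset.mem_union, not_or] at h
    exact Env.lookupES_eq_none_of_notMem_dom h.2.2

end PCtx

/-- `AppESRule U A x t U' A'`: appending `[x←t]` to an evaluation context turns its indices `(U, A)`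
into `(U', A')`. The rules (var), (gc), (I) and (U) have the same side conditions and indices
for multiplicative and exponential contexts, so both families are handled through this relation.
The freshness of `x` is not part of it. -/
inductive AppESRule (U A : Finset ℕ) (x : ℕ) : Term → Finset ℕ → Finset ℕ → Prop
  | var (y : ℕ) : x ∈ U ∪ A → AppESRule U A x (.var y) (upd U x y) (upd A x y)
  | gc (t : Term) : x ∉ U ∪ A → AppESRule U A x t U A
  | inert {i : Term} : x ∈ U ∪ A → i.InertPlus →
      AppESRule U A x i (U.erase x ∪ i.unv) (A.erase x ∪ i.anv)
  | val {v : Term} : x ∈ U → x ∉ A → v.IsValue → AppESRule U A x v (U.erase x) A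

theorem AppESRule.of_isValue {U A : Finset ℕ} {x : ℕ} {v : Term} (hA : x ∉ A) (hv : v.IsValue) :
    AppESRule U A x v (U.erase x) A := by
  by_cases hU : x ∈ U
  · exact .val hU hA hv
  · rw [Finset.erase_eq_of_notMem hU]
    exact .gc v (by simp [hU, hA])

theorem MEC.appES {P : PCtx} {U A U' A' : Finset ℕ} {x : ℕ} {t : Term}
    (h : MEC P U A) (hr : AppESRule U A x t U' A') (hx : x ∉ P.dom) :
    MEC (P.appES x t) U' A' := by
  cases hr with
  | var y hUA => exact h.var hUA hx
  | gc t hUA => exact h.gc t hUA hx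
  | inert hUA hi => exact h.inert hUA hi hx
  | val hU hA hv => exact h.val hU hA hv hx

namespace EEC

variable {P : PCtx} {U A U' A' : Finset ℕ} {k x : ℕ} {t v : Term}

theorem appES (h : EEC P U A k) (hr : AppESRule U A x t U' A') (hx : x ∉ P.dom) :
    EEC (P.appES x t) U' A' k := by
  cases hr with
  | var y hUA => exact h.var hUA hx
  | gc t hUA => exact h.gc t hUA hx
  | inert hUA hi => exact h.inert hUA hi hx
  | val hU hA hv => exact h.val hU hA hv hx

@[elab_as_elim]
theorem appES_induction {motive : ∀ P U A k, EEC P U A k → Prop}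
    (ax1 : ∀ {H} (hH : H.IsApp), motive (.tc H []) H.unv H.anv 0 (.ax1 hH))
    (ax2 : ∀ {P U A x H} (hP : MEC P U A) (hUA : x ∉ U ∪ A) (hx : x ∉ P.dom) (hH : H.IsApp),
      motive (P.hered x H) (U.erase x ∪ H.unv) (A ∪ H.anv) 0 (.ax2 hP hUA hx hH))
    (appES : ∀ {P U A k x t U' A'} (hP : EEC P U A k) (hr : AppESRule U A x t U' A')
      (hx : x ∉ P.dom), motive P U A k hP → motive (P.appES x t) U' A' k (hP.appES hr hx))
    (na : ∀ {P U A k x} (hP : EEC P U A k) (hA : x ∉ A) (hx : x ∉ P.dom),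
      motive P U A k hP → motive (P.hered x .hole) (U.erase x) A (k + 1) (.na hP hA hx))
    (h : EEC P U A k) : motive P U A k h := by
  induction h with
  | ax1 hH => exact ax1 hH
  | ax2 hP hUA hx hH => exact ax2 hP hUA hx hH
  | var hP hUA hx ih => exact appES hP (.var _ hUA) hx ih
  | inert hP hUA hi hx ih => exact appES hP (.inert hUA hi) hx ih
  | gc t hP hUA hx ih => exact appES hP (.gc t hUA) hx ih
  | val hP hU hA hv hx ih => exact appES hP (.val hU hA hv) hx ih
  | na hP hA hx ih => exact na hP hA hx ih

theorem exists_mec_plugT_app (h : EEC P U A 0) :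
    ∃ (P' : PCtx) (u : Term), MEC P' U A ∧ ∀ s, P'.plugT (.app s u) = P.plugT s := by
  generalize hk : 0 = k at h
  induction h using appES_induction with
  | @ax1 H hH =>
    obtain ⟨H', u, hwf, hunv, hanv, hplug⟩ := hH.exists_wf_plug_app
    exact ⟨.tc H' [], u, hunv ▸ hanv ▸ .ax hwf, fun s => congrArg (Program.mk · []) (hplug s)⟩
  | @ax2 P U A x H hP hUA hx hH =>
    obtain ⟨H', u, hwf, hunv, hanv, hplug⟩ := hH.exists_wf_plug_app
    have hU : x ∉ U := fun h => hUA (Finset.mem_union_left A h)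
    refine ⟨P.hered x H', u, ?_, fun s => by simp only [PCtx.plugT_hered, hplug]⟩
    rw [Finset.erase_eq_of_notMem hU, ← hunv, ← hanv]
    exact hP.her hUA hx hwf
  | @appES P U A k x t U' A' _ hr hx ih =>
    obtain ⟨P', u, hP', hplug⟩ := ih hk
    have hdom : P'.dom = P.dom := PCtx.dom_eq_of_plugT_eq (hplug t)
    exact ⟨P'.appES x t, u, hP'.appES hr (hdom ▸ hx),
      fun s => by simp only [PCtx.plugT_appES, hplug]⟩
  | na => cases hk

theorem exists_plugT_var_eq_plugT (h : EEC P U A (k + 1)) (hv : v.IsValue) :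
    ∃ (P' : PCtx) (x : ℕ), EEC P' U A k ∧ P'.lookup x = some v ∧
      P'.plugT (.var x) = P.plugT v := by
  generalize hn : k + 1 = n at h
  induction h using appES_induction with
  | ax1 | ax2 => cases hn
  | @appES P U A _ x t U' A' _ hr hx ih =>
    obtain ⟨P', y, hP', hlookup, hplug⟩ := ih hn
    have hdom : P'.dom = P.dom := PCtx.dom_eq_of_plugT_eq hplug
    exact ⟨P'.appES x t, y, hP'.appES hr (hdom ▸ hx), by simp [PCtx.lookup_appES, hlookup],
      by simp only [PCtx.plugT_appES, hplug]⟩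
  | @na P U A _ x hP hA hx =>
    cases hn
    exact ⟨P.appES x v, x, hP.appES (.of_isValue hA hv) hx,
      by simp [PCtx.lookup_appES, PCtx.lookup_eq_none_of_notMem_dom hx],
      PCtx.plugT_appES P x v (.var x)⟩

theorem exists_stepUMat (h : EEC P U A 0) (hv : v.IsValue) :
    ∃ r, StepUMat U A (P.plugT v) r := by
  obtain ⟨P', u, hP', hplug⟩ := h.exists_mec_plugT_app
  obtain ⟨y, t, rfl⟩ := hv
  exact ⟨P'.plugP ⟨t, [(y, u)]⟩, P', y, t, u, hP', (hplug _).symm, rfl⟩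

theorem exists_stepUEat (h : EEC P U A (k + 1)) (hv : v.IsValue) :
    ∃ P', EEC P' U A k ∧ StepUEat U A (P.plugT v) (P'.plugT v) := by
  obtain ⟨P', x, hP', hlookup, hplug⟩ := h.exists_plugT_var_eq_plugT hv
  exact ⟨P', hP', P', k, x, v, hP', hlookup, hv, hplug.symm, rfl⟩

end EEC

theorem usefulness_of_exponential_steps_general {P : PCtx} {U A : Finset ℕ} {k : ℕ} {v : Term}
    (h : EEC P U A k) (hv : v.IsValue) :
    ∃ q' r : Program, iterRel (StepUEat U A) k (P.plugT v) q' ∧ StepUMat U A q' r := by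
  induction k generalizing P with
  | zero =>
    obtain ⟨r, hr⟩ := h.exists_stepUMat hv
    exact ⟨P.plugT v, r, rfl, hr⟩
  | succ k ih =>
    obtain ⟨P', hP', hstep⟩ := h.exists_stepUEat hv
    obtain ⟨q', r, hsteps, hr⟩ := ih hP'
    exact ⟨q', r, ⟨P'.plugT v, hstep, hsteps⟩, hr⟩

/-- usefulness (correctness) of exponential steps: a useful exponential
step q = P⟨v⟩ of context P ∈ E@_{U,A} is followed by k useful exponential steps with
contexts in E@_{U,A} and then one useful multiplicative step with context in Em_{U,A},
where k is the number of applications of rule (e_NA) in the derivation of P ∈ E@_{U,A}. -/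
theorem usefulness_of_exponential_steps :
    ∀ (P : PCtx) (U A : Finset ℕ) (k : ℕ) (x : ℕ) (v : Term),
      EEC P U A k → P.lookup x = some v → v.IsValue →
      ∃ q' r : Program,
        iterRel (StepUEat U A) k (P.plugT v) q' ∧ StepUMat U A q' r := by
  intro P U A k x v h _ hv
  exact usefulness_of_exponential_steps_general h hv
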